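/- Let Ω ⊆ ℝ² be open and let w : Ω × ℝ → ℂ, B : Ω × ℝ → ℝ², ξ : Ω × ℝ → ℝ be smooth (not necessarily solutions of any equation). Then pointwise on Ω × ℝ: V(w,B,ξ) + ∂_t B + ∇ξ = 2(∂_ξ w, i∇_B w) + |w|²(∂_t B + ∇ξ). -/

import Mathlib

noncomputable section

open Complex

/-- Real inner product of two complex numbers: `(a,b) = Re a · Re b + Im a · Im b`. -/
def rip (a b : ℂ) : ℝ := a.re * b.re + a.im * b.im

/-- `(a, X)` for `a : ℂ` and `X : ℂ²`: the vector in `ℝ²` with components `(a,X₁)`, `(a,X₂)`. -/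
def ripv (a : ℂ) (X : ℂ × ℂ) : ℝ × ℝ := (rip a X.1, rip a X.2)

/-- Dot product of `X : ℂ²` with `Z : ℝ²`: `X·Z = X₁Z₁ + X₂Z₂ ∈ ℂ`. -/
def cdotR (X : ℂ × ℂ) (Z : ℝ × ℝ) : ℂ := X.1 * (Z.1 : ℂ) + X.2 * (Z.2 : ℂ)

/-- Euclidean dot product on `ℝ²`. -/
def rdot (a b : ℝ × ℝ) : ℝ := a.1 * b.1 + a.2 * b.2

/-- Perpendicular of a vector: `Z^⊥ = (−Z₂, Z₁)`. -/
def perp (a : ℝ × ℝ) : ℝ × ℝ := (-a.2, a.1)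

/-! ### Spatial differential operators for functions on `ℝ²` -/

/-- First spatial partial derivative `∂₁`. -/
def pd1 {E : Type*} [NormedAddCommGroup E] [NormedSpace ℝ E]
    (f : ℝ × ℝ → E) (x : ℝ × ℝ) : E := fderiv ℝ f x (1, 0)

/-- Second spatial partial derivative `∂₂`. -/
def pd2 {E : Type*} [NormedAddCommGroup E] [NormedSpace ℝ E]
    (f : ℝ × ℝ → E) (x : ℝ × ℝ) : E := fderiv ℝ f x (0, 1)

/-- Gradient `∇g = (∂₁g, ∂₂g)`. -/
def sgrad (g : ℝ × ℝ → ℝ) (x : ℝ × ℝ) : ℝ × ℝ := (pd1 g x, pd2 g x)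

/-- Perpendicular gradient `∇^⊥ g = (−∂₂g, ∂₁g)`. -/
def sgradPerp (g : ℝ × ℝ → ℝ) (x : ℝ × ℝ) : ℝ × ℝ := (-(pd2 g x), pd1 g x)

/-- Laplacian `Δg = ∂₁∂₁g + ∂₂∂₂g`. -/
def slap (g : ℝ × ℝ → ℝ) (x : ℝ × ℝ) : ℝ := pd1 (pd1 g) x + pd2 (pd2 g) x

/-- Curl of a vector field: `curl X = ∂₁X₂ − ∂₂X₁`. -/
def scurl (X : ℝ × ℝ → ℝ × ℝ) (x : ℝ × ℝ) : ℝ := (pd1 X x).2 - (pd2 X x).1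

/-- Divergence of a vector field: `div X = ∂₁X₁ + ∂₂X₂`. -/
def sdiv (X : ℝ × ℝ → ℝ × ℝ) (x : ℝ × ℝ) : ℝ := (pd1 X x).1 + (pd2 X x).2

/-- Covariant partial derivative `∂₁^A u = ∂₁u − iA₁u`. -/
def cpd1 (A : ℝ × ℝ → ℝ × ℝ) (u : ℝ × ℝ → ℂ) (x : ℝ × ℝ) : ℂ :=
  pd1 u x - Complex.I * ((A x).1 : ℂ) * u x

/-- Covariant partial derivative `∂₂^A u = ∂₂u − iA₂u`. -/
def cpd2 (A : ℝ × ℝ → ℝ × ℝ) (u : ℝ × ℝ → ℂ) (x : ℝ × ℝ) : ℂ :=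
  pd2 u x - Complex.I * ((A x).2 : ℂ) * u x

/-- Covariant gradient `∇_A u = ∇u − iAu`. -/
def covGrad (A : ℝ × ℝ → ℝ × ℝ) (u : ℝ × ℝ → ℂ) (x : ℝ × ℝ) : ℂ × ℂ :=
  (cpd1 A u x, cpd2 A u x)

/-- Covariant Laplacian `Δ_A u = ∂₁^A ∂₁^A u + ∂₂^A ∂₂^A u`. -/
def covLap (A : ℝ × ℝ → ℝ × ℝ) (u : ℝ × ℝ → ℂ) (x : ℝ × ℝ) : ℂ :=
  cpd1 A (cpd1 A u) x + cpd2 A (cpd2 A u) x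

/-- Vorticity `μ(u,A) = curl((iu, ∇_A u) + A)`. -/
def svort (u : ℝ × ℝ → ℂ) (A : ℝ × ℝ → ℝ × ℝ) (x : ℝ × ℝ) : ℝ :=
  scurl (fun y => ripv (Complex.I * u y) (covGrad A u y) + A y) x

/-- Ginzburg–Landau energy density
`g⁰_ε(u,A) = ½(|∇_A u|² + (1−|u|²)²/(2ε²) + (curl A)²)`. -/
def glEnergy (ε : ℝ) (u : ℝ × ℝ → ℂ) (A : ℝ × ℝ → ℝ × ℝ) (x : ℝ × ℝ) : ℝ :=
  (1 / 2) * (Complex.normSq (cpd1 A u x) + Complex.normSq (cpd2 A u x)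
    + (1 - Complex.normSq (u x)) ^ 2 / (2 * ε ^ 2) + (scurl A x) ^ 2)

/-! ### Space-time differential operators for functions on `ℝ² × ℝ`
(spatial operators act in the spatial variables, `tdt` is the time derivative) -/

/-- First spatial partial derivative `∂₁`. -/
def sp1 {E : Type*} [NormedAddCommGroup E] [NormedSpace ℝ E]
    (f : (ℝ × ℝ) × ℝ → E) (z : (ℝ × ℝ) × ℝ) : E := fderiv ℝ f z ((1, 0), 0)

/-- Second spatial partial derivative `∂₂`. -/
def sp2 {E : Type*} [NormedAddCommGroup E] [NormedSpace ℝ E]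
    (f : (ℝ × ℝ) × ℝ → E) (z : (ℝ × ℝ) × ℝ) : E := fderiv ℝ f z ((0, 1), 0)

/-- Time derivative `∂_t`. -/
def tdt {E : Type*} [NormedAddCommGroup E] [NormedSpace ℝ E]
    (f : (ℝ × ℝ) × ℝ → E) (z : (ℝ × ℝ) × ℝ) : E := fderiv ℝ f z ((0, 0), 1)

/-- Spatial gradient. -/
def tgrad (g : (ℝ × ℝ) × ℝ → ℝ) (z : (ℝ × ℝ) × ℝ) : ℝ × ℝ := (sp1 g z, sp2 g z)

/-- Spatial perpendicular gradient `∇^⊥ g = (−∂₂g, ∂₁g)`. -/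
def tgradPerp (g : (ℝ × ℝ) × ℝ → ℝ) (z : (ℝ × ℝ) × ℝ) : ℝ × ℝ := (-(sp2 g z), sp1 g z)

/-- Spatial Laplacian. -/
def tlap (g : (ℝ × ℝ) × ℝ → ℝ) (z : (ℝ × ℝ) × ℝ) : ℝ := sp1 (sp1 g) z + sp2 (sp2 g) z

/-- Spatial curl of a time-dependent vector field. -/
def tcurl (X : (ℝ × ℝ) × ℝ → ℝ × ℝ) (z : (ℝ × ℝ) × ℝ) : ℝ := (sp1 X z).2 - (sp2 X z).1

/-- Spatial divergence of a time-dependent vector field. -/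
def tdiv (X : (ℝ × ℝ) × ℝ → ℝ × ℝ) (z : (ℝ × ℝ) × ℝ) : ℝ := (sp1 X z).1 + (sp2 X z).2

/-- Covariant partial derivative `∂₁^B w = ∂₁w − iB₁w`. -/
def tcpd1 (B : (ℝ × ℝ) × ℝ → ℝ × ℝ) (w : (ℝ × ℝ) × ℝ → ℂ) (z : (ℝ × ℝ) × ℝ) : ℂ :=
  sp1 w z - Complex.I * ((B z).1 : ℂ) * w z

/-- Covariant partial derivative `∂₂^B w = ∂₂w − iB₂w`. -/
def tcpd2 (B : (ℝ × ℝ) × ℝ → ℝ × ℝ) (w : (ℝ × ℝ) × ℝ → ℂ) (z : (ℝ × ℝ) × ℝ) : ℂ :=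
  sp2 w z - Complex.I * ((B z).2 : ℂ) * w z

/-- Covariant gradient `∇_B w = ∇w − iBw` (spatial). -/
def tcovGrad (B : (ℝ × ℝ) × ℝ → ℝ × ℝ) (w : (ℝ × ℝ) × ℝ → ℂ) (z : (ℝ × ℝ) × ℝ) : ℂ × ℂ :=
  (tcpd1 B w z, tcpd2 B w z)

/-- Covariant Laplacian `Δ_B w`. -/
def tcovLap (B : (ℝ × ℝ) × ℝ → ℝ × ℝ) (w : (ℝ × ℝ) × ℝ → ℂ) (z : (ℝ × ℝ) × ℝ) : ℂ :=
  tcpd1 B (tcpd1 B w) z + tcpd2 B (tcpd2 B w) z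

/-- Covariant time derivative `∂_ξ w = ∂_t w + iξw`. -/
def covt (ξ : (ℝ × ℝ) × ℝ → ℝ) (w : (ℝ × ℝ) × ℝ → ℂ) (z : (ℝ × ℝ) × ℝ) : ℂ :=
  tdt w z + Complex.I * (ξ z : ℂ) * w z

/-- Vorticity `μ(w,B) = curl((iw, ∇_B w) + B)`. -/
def tvort (w : (ℝ × ℝ) × ℝ → ℂ) (B : (ℝ × ℝ) × ℝ → ℝ × ℝ) (z : (ℝ × ℝ) × ℝ) : ℝ :=
  tcurl (fun y => ripv (Complex.I * w y) (tcovGrad B w y) + B y) z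

/-- Velocity `V(w,B,ξ) = ∇(iw,∂_ξ w) − ∂_t(iw,∇_B w) − (∂_t B + ∇ξ)`. -/
def tvel (w : (ℝ × ℝ) × ℝ → ℂ) (B : (ℝ × ℝ) × ℝ → ℝ × ℝ) (ξ : (ℝ × ℝ) × ℝ → ℝ)
    (z : (ℝ × ℝ) × ℝ) : ℝ × ℝ :=
  tgrad (fun y => rip (Complex.I * w y) (covt ξ w y)) z
    - tdt (fun y => ripv (Complex.I * w y) (tcovGrad B w y)) z
    - (tdt B z + tgrad ξ z)

/-- Time-dependent Ginzburg–Landau energy density. -/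
def tglEnergy (ε : ℝ) (w : (ℝ × ℝ) × ℝ → ℂ) (B : (ℝ × ℝ) × ℝ → ℝ × ℝ)
    (z : (ℝ × ℝ) × ℝ) : ℝ :=
  (1 / 2) * (Complex.normSq (tcpd1 B w z) + Complex.normSq (tcpd2 B w z)
    + (1 - Complex.normSq (w z)) ^ 2 / (2 * ε ^ 2) + (tcurl B z) ^ 2)

/-! Metric compatibility `∂_v (f, g) = (D_v f, g) + (f, D_v g)` of covariant derivatives gives
`∂_v (iw, D_τ w) - ∂_τ (iw, D_v w) = 2 (D_τ w, i D_v w) + (iw, [D_v, D_τ] w)`, in which the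
commutator `[D_v, D_τ]` is multiplication by `-i` times the curvature of the connection. The
components of `V(w, B, ξ) + ∂_t B + ∇ξ` are this expression for `v` a coordinate direction and `τ`
the time direction, with potentials `B_j` and `-ξ` and hence curvature `-(∂_t B_j + ∂_j ξ)`. -/

section CovariantDerivative

variable {E : Type*} [NormedAddCommGroup E] [NormedSpace ℝ E]
  {a b : E → ℝ} {f g : E → ℂ} {z : E}

theorem rip_eq_inner (c d : ℂ) : rip c d = inner ℝ c d := by
  simp only [rip, Complex.inner, mul_re, conj_re, conj_im]
  ring

theorem differentiableAt_rip (hf : DifferentiableAt ℝ f z) (hg : DifferentiableAt ℝ g z) :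
    DifferentiableAt ℝ (fun y => rip (f y) (g y)) z := by
  simpa only [rip_eq_inner] using hf.inner ℝ hg

theorem fderiv_rip_apply (hf : DifferentiableAt ℝ f z) (hg : DifferentiableAt ℝ g z) (v : E) :
    fderiv ℝ (fun y => rip (f y) (g y)) z v =
      rip (fderiv ℝ f z v) (g z) + rip (f z) (fderiv ℝ g z v) := by
  simp only [rip_eq_inner, fderiv_inner_apply ℝ hf hg, add_comm]

/-- Covariant derivative `∂_v f - i a f` in the direction `v`. Here `a` is the component along `v`
of the connection, not the whole connection, so `covDeriv a v f` is not linear in `v`. -/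
def covDeriv (a : E → ℝ) (v : E) (f : E → ℂ) (z : E) : ℂ :=
  fderiv ℝ f z v - I * (a z : ℂ) * f z

theorem covDeriv_I_mul (a : E → ℝ) (v : E) (f : E → ℂ) (z : E) :
    covDeriv a v (fun y => I * f y) z = I * covDeriv a v f z := by
  have hfderiv : fderiv ℝ (fun y => I * f y) z = I • fderiv ℝ f z :=
    congrFun (fderiv_const_smul_field I) z
  simp only [covDeriv, hfderiv, smul_apply, smul_eq_mul]
  ring

theorem fderiv_rip_eq_rip_covDeriv (hf : DifferentiableAt ℝ f z) (hg : DifferentiableAt ℝ g z)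
    (a : E → ℝ) (v : E) :
    fderiv ℝ (fun y => rip (f y) (g y)) z v =
      rip (covDeriv a v f z) (g z) + rip (f z) (covDeriv a v g z) := by
  rw [fderiv_rip_apply hf hg]
  simp only [rip, covDeriv, mul_assoc, sub_re, sub_im, I_mul_re, I_mul_im, re_ofReal_mul,
    im_ofReal_mul]
  ring

theorem hasFDerivAt_covDeriv (hf : ContDiffAt ℝ 2 f z) (ha : DifferentiableAt ℝ a z) (v : E) :
    HasFDerivAt (covDeriv a v f)
      ((fderiv ℝ (fderiv ℝ f) z).flip v -
        ((I * a z) • fderiv ℝ f z + f z • I • ofRealCLM ∘L fderiv ℝ a z)) z := by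
  have hdf : DifferentiableAt ℝ (fderiv ℝ f) z :=
    (hf.fderiv_right (m := 1) one_add_one_eq_two.le).differentiableAt one_ne_zero
  have hIa : HasFDerivAt (fun y => I * (a y : ℂ)) (I • ofRealCLM ∘L fderiv ℝ a z) z :=
    (ofRealCLM.hasFDerivAt.comp z ha.hasFDerivAt).const_mul I
  have hf_fderiv := (hf.differentiableAt two_ne_zero).hasFDerivAt
  simpa only [ContinuousLinearMap.comp_zero, zero_add] using!
    (hdf.hasFDerivAt.clm_apply (hasFDerivAt_const v z)).fun_sub (hIa.mul hf_fderiv)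

theorem fderiv_covDeriv_apply (hf : ContDiffAt ℝ 2 f z) (ha : DifferentiableAt ℝ a z) (u v : E) :
    fderiv ℝ (covDeriv a v f) z u =
      fderiv ℝ (fderiv ℝ f) z u v - (I * a z * fderiv ℝ f z u + I * fderiv ℝ a z u * f z) := by
  rw [(hasFDerivAt_covDeriv hf ha v).fderiv]
  simp only [sub_apply, add_apply, smul_apply, smul_eq_mul, ContinuousLinearMap.flip_apply,
    ContinuousLinearMap.comp_apply, ofRealCLM_apply, mul_comm]

theorem covDeriv_commutator (hf : ContDiffAt ℝ 2 f z) (ha : DifferentiableAt ℝ a z)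
    (hb : DifferentiableAt ℝ b z) (u v : E) :
    covDeriv a u (covDeriv b v f) z - covDeriv b v (covDeriv a u f) z =
      -(I * ((fderiv ℝ b z u - fderiv ℝ a z v : ℝ) : ℂ) * f z) := by
  have hsymm : fderiv ℝ (fderiv ℝ f) z u v = fderiv ℝ (fderiv ℝ f) z v u :=
    (hf.isSymmSndFDerivAt (by simp)).eq u v
  simp only [fderiv_covDeriv_apply hf ha, fderiv_covDeriv_apply hf hb, hsymm, covDeriv,
    ofReal_sub]
  ring

theorem fderiv_rip_I_mul_covDeriv_sub (hf : ContDiffAt ℝ 2 f z) (ha : DifferentiableAt ℝ a z)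
    (hb : DifferentiableAt ℝ b z) (u v : E) :
    fderiv ℝ (fun y => rip (I * f y) (covDeriv b v f y)) z u -
        fderiv ℝ (fun y => rip (I * f y) (covDeriv a u f y)) z v =
      2 * rip (covDeriv b v f z) (I * covDeriv a u f z) +
        normSq (f z) * (fderiv ℝ a z v - fderiv ℝ b z u) := by
  have hf_diff : DifferentiableAt ℝ f z := hf.differentiableAt two_ne_zero
  have hDu := (hasFDerivAt_covDeriv hf ha u).differentiableAt
  have hDv := (hasFDerivAt_covDeriv hf hb v).differentiableAt
  have hIf : DifferentiableAt ℝ (fun y => I * f y) z := hf_diff.const_mul I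
  calc
    _ = rip (I * covDeriv a u f z) (covDeriv b v f z) +
            rip (I * f z) (covDeriv a u (covDeriv b v f) z) -
          (rip (I * covDeriv b v f z) (covDeriv a u f z) +
            rip (I * f z) (covDeriv b v (covDeriv a u f) z)) := by
      rw [fderiv_rip_eq_rip_covDeriv hIf hDv a, fderiv_rip_eq_rip_covDeriv hIf hDu b,
        covDeriv_I_mul, covDeriv_I_mul]
    _ = 2 * rip (covDeriv b v f z) (I * covDeriv a u f z) + rip (I * f z)
          (covDeriv a u (covDeriv b v f) z - covDeriv b v (covDeriv a u f) z) := by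
      simp only [rip, I_mul_re, I_mul_im, sub_re, sub_im]
      ring
    _ = _ := by
      rw [covDeriv_commutator hf ha hb, mul_assoc]
      simp only [rip, normSq_apply, neg_re, neg_im, I_mul_re, I_mul_im, re_ofReal_mul,
        im_ofReal_mul]
      ring

end CovariantDerivative

section SpaceTime

variable {E F : Type*} [NormedAddCommGroup E] [NormedSpace ℝ E] [NormedAddCommGroup F]
  [NormedSpace ℝ F] {w : (ℝ × ℝ) × ℝ → ℂ} {a ξ : (ℝ × ℝ) × ℝ → ℝ} {z : (ℝ × ℝ) × ℝ}

theorem tdt_prodMk {f : (ℝ × ℝ) × ℝ → E} {g : (ℝ × ℝ) × ℝ → F} (hf : DifferentiableAt ℝ f z)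
    (hg : DifferentiableAt ℝ g z) : tdt (fun y => (f y, g y)) z = (tdt f z, tdt g z) := by
  simp only [tdt, hf.fderiv_prodMk hg, ContinuousLinearMap.prod_apply]

theorem covt_eq_covDeriv (ξ : (ℝ × ℝ) × ℝ → ℝ) (w : (ℝ × ℝ) × ℝ → ℂ) :
    covt ξ w = covDeriv (-ξ) ((0, 0), 1) w := by
  ext1 y
  simp only [covt, tdt, covDeriv, Pi.neg_apply, ofReal_neg]
  ring

theorem fderiv_rip_I_mul_covt_sub (hw : ContDiffAt ℝ 2 w z)
    (ha : DifferentiableAt ℝ a z) (hξ : DifferentiableAt ℝ ξ z) (v : (ℝ × ℝ) × ℝ) :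
    fderiv ℝ (fun y => rip (I * w y) (covt ξ w y)) z v -
        tdt (fun y => rip (I * w y) (covDeriv a v w y)) z =
      2 * rip (covt ξ w z) (I * covDeriv a v w z) +
        normSq (w z) * (tdt a z + fderiv ℝ ξ z v) := by
  rw [covt_eq_covDeriv, tdt, fderiv_rip_I_mul_covDeriv_sub hw ha hξ.neg, tdt, fderiv_neg,
    neg_apply, sub_neg_eq_add]

theorem velocity_rewrite_general {B : (ℝ × ℝ) × ℝ → ℝ × ℝ} (hw : ContDiffAt ℝ 2 w z)
    (hB : DifferentiableAt ℝ B z) (hξ : DifferentiableAt ℝ ξ z) :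
    tvel w B ξ z + tdt B z + tgrad ξ z =
      (2 : ℝ) • ripv (covt ξ w z) (I * tcpd1 B w z, I * tcpd2 B w z) +
        normSq (w z) • (tdt B z + tgrad ξ z) := by
  have hIw : DifferentiableAt ℝ (fun y => I * w y) z :=
    (hw.differentiableAt two_ne_zero).const_mul I
  have hB_tdt : tdt B z = (tdt (fun y => (B y).1) z, tdt (fun y => (B y).2) z) :=
    tdt_prodMk hB.fst hB.snd
  have hcurrent_tdt : tdt (fun y => ripv (I * w y) (tcovGrad B w y)) z =
      (tdt (fun y => rip (I * w y) (tcpd1 B w y)) z,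
        tdt (fun y => rip (I * w y) (tcpd2 B w y)) z) :=
    tdt_prodMk (differentiableAt_rip hIw (hasFDerivAt_covDeriv hw hB.fst _).differentiableAt)
      (differentiableAt_rip hIw (hasFDerivAt_covDeriv hw hB.snd _).differentiableAt)
  rw [tvel, add_assoc, sub_add_cancel, hcurrent_tdt, hB_tdt]
  -- `tcpd1 B` and `tcpd2 B` unfold to `covDeriv` with potentials `B₁` and `B₂`.
  exact Prod.ext (fderiv_rip_I_mul_covt_sub hw hB.fst hξ ((1, 0), 0))
    (fderiv_rip_I_mul_covt_sub hw hB.snd hξ ((0, 1), 0))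

end SpaceTime

/-- `V(w,B,ξ) + ∂_t B + ∇ξ = 2(∂_ξ w, i∇_B w) + |w|²(∂_t B + ∇ξ)`
pointwise on `Ω × ℝ`. -/
theorem velocity_rewrite
    (Ω : Set (ℝ × ℝ)) (hΩ : IsOpen Ω)
    (w : (ℝ × ℝ) × ℝ → ℂ) (B : (ℝ × ℝ) × ℝ → ℝ × ℝ) (ξ : (ℝ × ℝ) × ℝ → ℝ)
    (hw : ContDiffOn ℝ (⊤ : ℕ∞) w (Ω ×ˢ (Set.univ : Set ℝ)))
    (hB : ContDiffOn ℝ (⊤ : ℕ∞) B (Ω ×ˢ (Set.univ : Set ℝ)))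
    (hξ : ContDiffOn ℝ (⊤ : ℕ∞) ξ (Ω ×ˢ (Set.univ : Set ℝ))) :
    ∀ x ∈ Ω, ∀ t : ℝ,
      tvel w B ξ (x, t) + tdt B (x, t) + tgrad ξ (x, t)
        = (2 : ℝ) • ripv (covt ξ w (x, t))
            (Complex.I * tcpd1 B w (x, t), Complex.I * tcpd2 B w (x, t))
          + (Complex.normSq (w (x, t))) • (tdt B (x, t) + tgrad ξ (x, t)) := by
  intro x hx t
  have hmem : Ω ×ˢ Set.univ ∈ nhds (x, t) := (hΩ.prod isOpen_univ).mem_nhds ⟨hx, trivial⟩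
  exact velocity_rewrite_general (contDiffAt_infty.1 (hw.contDiffAt hmem) 2)
    ((hB.contDiffAt hmem).differentiableAt (by simp))
    ((hξ.contDiffAt hmem).differentiableAt (by simp))

end
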